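/- For all integers n ≥ 2, k ≥ 1, and any i ∈ {1,…,n}, the distribution of the position of card i under the k-riffle shuffle measure is within total variation distance n/(4k) of uniform: (1/2)·Σ_{j=1}^{n} | Σ_{π ∈ S_n with π(i)=j} R_{k,n}(π) − 1/n | ≤ n/(4k). -/

import Mathlib

/-- Number of descents of a permutation of `{1,...,n}` (here `Fin n`, 0-indexed):
the number of positions `i` with `1 ≤ i ≤ n-1` and `π(i) > π(i+1)`. -/
def numDescents (n : ℕ) (π : Equiv.Perm (Fin n)) : ℕ :=
  ((Finset.range (n - 1)).filter (fun i =>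
    ∃ h : i + 1 < n, π ⟨i + 1, h⟩ < π ⟨i, Nat.lt_of_succ_lt h⟩)).card

/-- `π` has a cyclic descent at `n` if `π(n) > π(1)`. -/
def hasCyclicDescentAtLast (n : ℕ) (π : Equiv.Perm (Fin n)) : Prop :=
  ∃ h : 0 < n, π ⟨0, h⟩ < π ⟨n - 1, Nat.sub_lt h Nat.one_pos⟩

instance (n : ℕ) (π : Equiv.Perm (Fin n)) : Decidable (hasCyclicDescentAtLast n π) :=
  exists_prop_decidable _

/-- Number of cyclic descents: `d(π)+1` if `π` has a cyclic descent at `n`, else `d(π)`. -/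
def numCyclicDescents (n : ℕ) (π : Equiv.Perm (Fin n)) : ℕ :=
  numDescents n π + if hasCyclicDescentAtLast n π then 1 else 0

/-- The k-riffle shuffle measure `R_{k,n}(π) = binom(n+k-d(π)-1, n) / k^n`. -/
noncomputable def riffle (k n : ℕ) (π : Equiv.Perm (Fin n)) : ℝ :=
  (Nat.choose (n + k - numDescents n π - 1) n : ℝ) / (k : ℝ) ^ n

/-- The cut-then-k-riffle-shuffle measure
`C_{k,n}(π) = binom(n+k-cd(π)-1, n-1) / (n·k^(n-1))`. -/
noncomputable def cutRiffle (k n : ℕ) (π : Equiv.Perm (Fin n)) : ℝ :=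
  (Nat.choose (n + k - numCyclicDescents n π - 1) (n - 1) : ℝ) / ((n : ℝ) * (k : ℝ) ^ (n - 1))

/-!
Cutting the deck before riffling makes the position of every card exactly uniform, because
`cutRiffle` is invariant under rotations: these only permute the cyclic descents. It therefore
suffices to bound the `ℓ¹` distance between `riffle` and `cutRiffle`. With `c` cyclic descents,
`riffle k n π / cutRiffle k n π` is `1 + (n - c) / k` if the last position is a cyclic descent and
`1 - c / k` if not. Averaging over rotations replaces the last position by a uniformly random one,
which is a cyclic descent with probability `c / n`. Hence the relative error has mean `0`, and its
mean absolute value is `2 c (n - c) / (n k) ≤ n / (2 k)`.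

Both measures have total mass `1` by induction: they have equal mass because the relative error has
mean `0`, and `cutRiffle k (n + 1)` restricted to the permutations fixing the first position is
`riffle k n` divided by `n + 1`.
-/

open Equiv Finset

section CenteredIndicator

variable {α β : Type*} [Fintype α] [DecidableEq α] [Fintype β] [DecidableEq β]

/-- The indicator function of `s` minus its mean over `α`, multiplied by the cardinality of `α` so
that no division occurs. It measures the error made when `cutRiffle` replaces `riffle`. -/
def centeredIndicator (s : Finset α) (a : α) : ℝ :=
  (if a ∈ s then (Fintype.card α : ℝ) else 0) - #s

theorem centeredIndicator_congr {s : Finset α} {t : Finset β} (e : α ≃ β)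
    (hst : ∀ a, a ∈ s ↔ e a ∈ t) (a : α) :
    centeredIndicator s a = centeredIndicator t (e a) := by
  simp only [centeredIndicator, hst a, card_equiv e hst, Fintype.card_congr e]

theorem sum_centeredIndicator (s : Finset α) : ∑ a, centeredIndicator s a = 0 := by
  simp [centeredIndicator, mul_comm]

theorem abs_centeredIndicator (s : Finset α) (a : α) :
    |centeredIndicator s a| = if a ∈ s then (#sᶜ : ℝ) else #s := by
  have hcard : (#s : ℝ) + #sᶜ = Fintype.card α := mod_cast card_add_card_compl s
  unfold centeredIndicator
  split_ifs
  · rw [← hcard, add_sub_cancel_left, Nat.abs_cast]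
  · rw [zero_sub, abs_neg, Nat.abs_cast]

theorem sum_abs_centeredIndicator (s : Finset α) :
    ∑ a, |centeredIndicator s a| = 2 * #s * #sᶜ := by
  simp only [abs_centeredIndicator, sum_ite, filter_mem_eq_inter, univ_inter,
    filter_notMem_eq_sdiff, ← compl_eq_univ_sdiff, sum_const, nsmul_eq_mul]
  ring

theorem sum_abs_centeredIndicator_le (s : Finset α) :
    ∑ a, |centeredIndicator s a| ≤ (Fintype.card α : ℝ) ^ 2 / 2 := by
  have hcard : (#s : ℝ) + #sᶜ = Fintype.card α := mod_cast card_add_card_compl s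
  rw [sum_abs_centeredIndicator, ← hcard]
  linarith [four_mul_le_sq_add (#s : ℝ) #sᶜ]

end CenteredIndicator

section Rotation

variable {A M : Type*} [AddGroup A] [Fintype A] [DecidableEq A] [AddCommMonoid M]

theorem card_nsmul_sum_perm_eq_sum_sum (f : Perm A → A → M)
    (hf : ∀ π c a, f (π * Equiv.addRight c) a = f π (a + c)) (a : A) :
    Fintype.card A • ∑ π, f π a = ∑ π, ∑ b, f π b := by
  have hrotate (b : A) : ∑ π, f π b = ∑ π, f π a :=
    Fintype.sum_equiv (Equiv.mulRight (Equiv.addRight (-a + b))) _ _ fun π => by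
      simp [hf]
  rw [sum_comm, sum_congr rfl fun b _ => hrotate b, sum_const, card_univ]

theorem card_nsmul_sum_filter_apply_eq (w : Perm A → M)
    (hw : ∀ π c, w (π * Equiv.addRight c) = w π) (a b : A) :
    Fintype.card A • ∑ π with π a = b, w π = ∑ π, w π := by
  rw [sum_filter, card_nsmul_sum_perm_eq_sum_sum (fun π a => if π a = b then w π else 0)
    (fun π c a => by simp [hw])]
  simp [← Equiv.eq_symm_apply]

end Rotation

theorem sum_abs_sum_filter_le {α β G : Type*} [Fintype β] [DecidableEq β] [AddCommGroup G]
    [LinearOrder G] [IsOrderedAddMonoid G] (s : Finset α) (g : α → β) (f : α → G) :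
    ∑ b, |∑ a ∈ s with g a = b, f a| ≤ ∑ a ∈ s, |f a| :=
  calc ∑ b, |∑ a ∈ s with g a = b, f a|
      ≤ ∑ b, ∑ a ∈ s with g a = b, |f a| := sum_le_sum fun _ _ => abs_sum_le_sum_abs _ _
    _ = ∑ a ∈ s, |f a| := sum_fiberwise s g _

theorem cast_choose_succ_mul_succ {R : Type*} [CommRing R] (m n : ℕ) :
    (m.choose (n + 1) : R) * (n + 1) = m.choose n * (m - n) := by
  rcases le_or_gt n m with hnm | hmn
  · rw [← Nat.cast_sub hnm]
    simpa using congrArg (Nat.cast : ℕ → R) (Nat.choose_succ_right_eq m n)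
  · simp [Nat.choose_eq_zero_of_lt hmn, Nat.choose_eq_zero_of_lt (hmn.trans n.lt_succ_self)]

theorem numDescents_succ {n : ℕ} (π : Perm (Fin (n + 1))) :
    numDescents (n + 1) π = #{p : Fin n | π p.succ < π p.castSucc} := by
  rw [numDescents, card_filter, card_filter, Nat.add_sub_cancel, sum_range]
  refine sum_congr rfl fun p _ => if_congr ?_ rfl rfl
  exact ⟨fun ⟨_, hp⟩ => hp, fun hp => ⟨p.succ.isLt, hp⟩⟩

theorem neg_one_eq_last (n : ℕ) : (-1 : Fin (n + 1)) = Fin.last n :=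
  Fin.ext Fin.coe_neg_one

section CyclicDescents

variable {n : ℕ} [NeZero n]

/-- The set of cyclic descents of `π`: addition in `Fin n` is modulo `n`, so that the last position
`-1` is compared with position `0`. -/
def cyclicDescents (π : Perm (Fin n)) : Finset (Fin n) :=
  {p | π (p + 1) < π p}

theorem mem_cyclicDescents {π : Perm (Fin n)} {p : Fin n} :
    p ∈ cyclicDescents π ↔ π (p + 1) < π p := by
  simp [cyclicDescents]

theorem mem_cyclicDescents_mul_addRight (π : Perm (Fin n)) (c p : Fin n) :
    p ∈ cyclicDescents (π * Equiv.addRight c) ↔ p + c ∈ cyclicDescents π := by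
  simp only [mem_cyclicDescents, Perm.mul_apply, Equiv.coe_addRight, add_right_comm p 1 c]

theorem centeredIndicator_cyclicDescents_mul_addRight (π : Perm (Fin n)) (c p : Fin n) :
    centeredIndicator (cyclicDescents (π * Equiv.addRight c)) p =
      centeredIndicator (cyclicDescents π) (p + c) :=
  centeredIndicator_congr (Equiv.addRight c) (mem_cyclicDescents_mul_addRight π c) p

theorem numDescents_lt (π : Perm (Fin n)) : numDescents n π < n := by
  have hle : numDescents n π ≤ n - 1 := by
    simpa [numDescents] using card_filter_le (range (n - 1)) _
  exact hle.trans_lt (Nat.sub_one_lt (NeZero.ne n))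

theorem hasCyclicDescentAtLast_iff (π : Perm (Fin n)) :
    hasCyclicDescentAtLast n π ↔ -1 ∈ cyclicDescents π := by
  obtain ⟨n, rfl⟩ : ∃ m, n = m + 1 := Nat.exists_eq_succ_of_ne_zero (NeZero.ne n)
  rw [mem_cyclicDescents, neg_add_cancel, neg_one_eq_last]
  exact ⟨fun ⟨_, h⟩ => h, fun h => ⟨n.succ_pos, h⟩⟩

theorem numCyclicDescents_eq_card (π : Perm (Fin n)) :
    numCyclicDescents n π = #(cyclicDescents π) := by
  obtain ⟨n, rfl⟩ : ∃ m, n = m + 1 := Nat.exists_eq_succ_of_ne_zero (NeZero.ne n)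
  simp only [numCyclicDescents, numDescents_succ, hasCyclicDescentAtLast_iff, neg_one_eq_last,
    cyclicDescents, mem_filter_univ, card_filter, Fin.sum_univ_castSucc, Fin.coeSucc_eq_succ]

end CyclicDescents

section CutRiffle

variable {n k : ℕ}

theorem cutRiffle_nonneg (π : Perm (Fin n)) : 0 ≤ cutRiffle k n π := by
  unfold cutRiffle
  positivity

theorem cutRiffle_mul_addRight [NeZero n] (π : Perm (Fin n)) (c : Fin n) :
    cutRiffle k n (π * Equiv.addRight c) = cutRiffle k n π := by
  have hcard : #(cyclicDescents (π * Equiv.addRight c)) = #(cyclicDescents π) :=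
    card_equiv (Equiv.addRight c) (mem_cyclicDescents_mul_addRight π c)
  simp only [cutRiffle, numCyclicDescents_eq_card, hcard]

theorem choose_numDescents_mul [NeZero n] (hk : k ≠ 0) (π : Perm (Fin n)) :
    ((n + k - numDescents n π - 1).choose n : ℝ) * n =
      (n + k - numCyclicDescents n π - 1).choose (n - 1) *
        (k + centeredIndicator (cyclicDescents π) (-1)) := by
  obtain ⟨n, rfl⟩ : ∃ m, n = m + 1 := Nat.exists_eq_succ_of_ne_zero (NeZero.ne n)
  have hd : numDescents (n + 1) π < n + 1 := numDescents_lt π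
  obtain ⟨m, hm⟩ : ∃ m, n + k = numDescents (n + 1) π + m := Nat.exists_eq_add_of_le (by omega)
  have hm' : (n : ℝ) + k = numDescents (n + 1) π + m := mod_cast hm
  rw [centeredIndicator, ← numCyclicDescents_eq_card, Fintype.card_fin, Nat.add_sub_cancel,
    show n + 1 + k - numDescents (n + 1) π - 1 = m by omega]
  by_cases hlast : hasCyclicDescentAtLast (n + 1) π
  · obtain ⟨m, rfl⟩ := Nat.exists_eq_succ_of_ne_zero (show m ≠ 0 by omega)
    have hchoose : ((m : ℝ) + 1) * m.choose n = (m + 1).choose (n + 1) * (n + 1) :=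
      mod_cast Nat.add_one_mul_choose_eq m n
    rw [numCyclicDescents, if_pos hlast, if_pos ((hasCyclicDescentAtLast_iff π).mp hlast),
      show n + 1 + k - (numDescents (n + 1) π + 1) - 1 = m by omega]
    push_cast at hm' ⊢
    linear_combination -hchoose - (m.choose n : ℝ) * hm'
  · rw [numCyclicDescents, if_neg hlast, if_neg (mt (hasCyclicDescentAtLast_iff π).mpr hlast),
      show n + 1 + k - (numDescents (n + 1) π + 0) - 1 = m by omega]
    push_cast
    linear_combination cast_choose_succ_mul_succ (R := ℝ) m n - (m.choose n : ℝ) * hm'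

theorem riffle_sub_cutRiffle [NeZero n] (hk : k ≠ 0) (π : Perm (Fin n)) :
    riffle k n π - cutRiffle k n π =
      cutRiffle k n π * centeredIndicator (cyclicDescents π) (-1) / k := by
  have hn : (n : ℝ) ≠ 0 := NeZero.ne _
  have hk' : (k : ℝ) ≠ 0 := Nat.cast_ne_zero.mpr hk
  rw [riffle, cutRiffle, ← mul_pow_sub_one (NeZero.ne n) (k : ℝ)]
  field_simp
  linear_combination choose_numDescents_mul hk π

theorem mul_sum_cutRiffle_mul_centeredIndicator [NeZero n] (g : ℝ → ℝ) (p : Fin n) :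
    n * ∑ π, cutRiffle k n π * g (centeredIndicator (cyclicDescents π) p) =
      ∑ π, cutRiffle k n π * ∑ q, g (centeredIndicator (cyclicDescents π) q) := by
  simpa [mul_sum] using card_nsmul_sum_perm_eq_sum_sum
    (fun π q => cutRiffle k n π * g (centeredIndicator (cyclicDescents π) q))
    (fun π c q => by
      rw [cutRiffle_mul_addRight, centeredIndicator_cyclicDescents_mul_addRight]) p

theorem sum_riffle_eq_sum_cutRiffle [NeZero n] (hk : k ≠ 0) :
    ∑ π, riffle k n π = ∑ π, cutRiffle k n π := by
  have hn : (n : ℝ) ≠ 0 := NeZero.ne _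
  have hmean : ∑ π, cutRiffle k n π * centeredIndicator (cyclicDescents π) (-1) = 0 := by
    simpa [sum_centeredIndicator, hn] using
      mul_sum_cutRiffle_mul_centeredIndicator (k := k) id (-1 : Fin n)
  rw [← sub_eq_zero, ← sum_sub_distrib, sum_congr rfl fun π _ => riffle_sub_cutRiffle hk π,
    ← sum_div, hmean, zero_div]

theorem mul_sum_cutRiffle_filter_apply_eq [NeZero n] (i j : Fin n) :
    n * ∑ π : Perm (Fin n) with π i = j, cutRiffle k n π = ∑ π, cutRiffle k n π := by
  simpa using card_nsmul_sum_filter_apply_eq (cutRiffle k n) cutRiffle_mul_addRight i j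

end CutRiffle

section TotalMass

variable {n k : ℕ}

theorem numDescents_decomposeFin_symm_zero (σ : Perm (Fin n)) :
    numDescents (n + 1) (Perm.decomposeFin.symm (0, σ)) = numDescents n σ := by
  rcases n with _ | n
  · simp [numDescents]
  · rw [numDescents_succ, numDescents_succ, Fin.card_filter_univ_succ']
    simp

theorem hasCyclicDescentAtLast_decomposeFin_symm_zero [NeZero n] (σ : Perm (Fin n)) :
    hasCyclicDescentAtLast (n + 1) (Perm.decomposeFin.symm (0, σ)) := by
  obtain ⟨n, rfl⟩ : ∃ m, n = m + 1 := Nat.exists_eq_succ_of_ne_zero (NeZero.ne n)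
  rw [hasCyclicDescentAtLast_iff, mem_cyclicDescents, neg_add_cancel, neg_one_eq_last,
    ← Fin.succ_last, Perm.decomposeFin_symm_apply_zero, Perm.decomposeFin_symm_apply_succ]
  simp

theorem mul_cutRiffle_decomposeFin_symm_zero (σ : Perm (Fin n)) :
    ((n + 1 : ℕ) : ℝ) * cutRiffle k (n + 1) (Perm.decomposeFin.symm (0, σ)) = riffle k n σ := by
  rcases n with _ | n
  · simp [cutRiffle, riffle]
  · rw [cutRiffle, riffle, numCyclicDescents, numDescents_decomposeFin_symm_zero,
      if_pos (hasCyclicDescentAtLast_decomposeFin_symm_zero σ), mul_div_assoc',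
      mul_div_mul_left _ _ (NeZero.ne _), Nat.add_sub_cancel, add_right_comm (n + 1) 1 k,
      Nat.add_sub_add_right]

theorem sum_cutRiffle_succ : ∑ π, cutRiffle k (n + 1) π = ∑ σ, riffle k n σ := by
  calc ∑ π, cutRiffle k (n + 1) π
      = (n + 1 : ℕ) * ∑ π : Perm (Fin (n + 1)) with π 0 = 0, cutRiffle k (n + 1) π :=
        (mul_sum_cutRiffle_filter_apply_eq 0 0).symm
    _ = (n + 1 : ℕ) * ∑ σ : Perm (Fin n), cutRiffle k (n + 1) (Perm.decomposeFin.symm (0, σ)) := by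
        rw [sum_filter, ← Equiv.sum_comp Perm.decomposeFin.symm, Fintype.sum_prod_type]
        simp
    _ = ∑ σ, riffle k n σ := by
        simp only [mul_sum, mul_cutRiffle_decomposeFin_symm_zero]

theorem sum_riffle (hk : k ≠ 0) : ∑ π, riffle k n π = 1 := by
  induction n with
  | zero => simp [riffle]
  | succ n ih => rw [sum_riffle_eq_sum_cutRiffle hk, sum_cutRiffle_succ, ih]

theorem sum_cutRiffle [NeZero n] (hk : k ≠ 0) : ∑ π, cutRiffle k n π = 1 := by
  rw [← sum_riffle_eq_sum_cutRiffle hk, sum_riffle hk]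

end TotalMass

section TotalVariation

variable {n k : ℕ} [NeZero n]

theorem sum_cutRiffle_filter_apply_eq (hk : k ≠ 0) (i j : Fin n) :
    ∑ π : Perm (Fin n) with π i = j, cutRiffle k n π = 1 / n := by
  rw [eq_div_iff (NeZero.ne _), mul_comm, mul_sum_cutRiffle_filter_apply_eq, sum_cutRiffle hk]

theorem sum_cutRiffle_mul_abs_centeredIndicator_le (hk : k ≠ 0) (p : Fin n) :
    ∑ π, cutRiffle k n π * |centeredIndicator (cyclicDescents π) p| ≤ (n : ℝ) / 2 := by
  have hn : (0 : ℝ) < n := Nat.cast_pos.mpr (NeZero.pos n)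
  refine le_of_mul_le_mul_left ?_ hn
  calc n * ∑ π, cutRiffle k n π * |centeredIndicator (cyclicDescents π) p|
      = ∑ π, cutRiffle k n π * ∑ q, |centeredIndicator (cyclicDescents π) q| :=
        mul_sum_cutRiffle_mul_centeredIndicator abs p
    _ ≤ ∑ π : Perm (Fin n), cutRiffle k n π * ((n : ℝ) ^ 2 / 2) := by
        gcongr with π
        · exact cutRiffle_nonneg π
        · simpa using sum_abs_centeredIndicator_le (cyclicDescents π)
    _ = n * (n / 2 : ℝ) := by
        rw [← sum_mul, sum_cutRiffle hk]
        ring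

theorem sum_abs_riffle_sub_cutRiffle_le (hk : k ≠ 0) :
    ∑ π, |riffle k n π - cutRiffle k n π| ≤ (n : ℝ) / (2 * k) :=
  calc ∑ π, |riffle k n π - cutRiffle k n π|
      = (∑ π, cutRiffle k n π * |centeredIndicator (cyclicDescents π) (-1)|) / k := by
        simp only [riffle_sub_cutRiffle hk, abs_div, abs_mul, abs_of_nonneg (cutRiffle_nonneg _),
          Nat.abs_cast, sum_div]
    _ ≤ (n / 2 : ℝ) / k := by
        gcongr
        exact sum_cutRiffle_mul_abs_centeredIndicator_le hk (-1)
    _ = n / (2 * k) := div_div _ _ _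

end TotalVariation

/-- under the k-riffle shuffle measure, the distribution of the position
of any single card is within total variation distance `n/(4k)` of uniform. -/
theorem riffle_position_totalVariation_le (n k : ℕ) (hn : 2 ≤ n) (hk : 1 ≤ k) (i : Fin n) :
    (1 / 2) * ∑ j : Fin n,
        |(∑ π ∈ Finset.univ.filter (fun π : Equiv.Perm (Fin n) => π i = j), riffle k n π)
          - 1 / (n : ℝ)|
      ≤ (n : ℝ) / (4 * (k : ℝ)) := by
  have : NeZero n := ⟨by omega⟩
  have hk' : k ≠ 0 := Nat.one_le_iff_ne_zero.mp hk
  calc (1 / 2) * ∑ j, |(∑ π : Perm (Fin n) with π i = j, riffle k n π) - 1 / (n : ℝ)|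
      = (1 / 2) * ∑ j, |∑ π : Perm (Fin n) with π i = j, (riffle k n π - cutRiffle k n π)| := by
        simp only [sum_sub_distrib, sum_cutRiffle_filter_apply_eq hk']
    _ ≤ (1 / 2) * ∑ π, |riffle k n π - cutRiffle k n π| := by
        gcongr
        exact sum_abs_sum_filter_le univ (fun π : Perm (Fin n) => π i) _
    _ ≤ (1 / 2) * (n / (2 * k)) := by
        gcongr
        exact sum_abs_riffle_sub_cutRiffle_le hk'
    _ = n / (4 * k) := by ring
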